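/- arXiv:1210.0401 — 2 statements merged into one kernel-verified Lean document; each statement's English description precedes it below -/
import Mathlib

section
/- Let V₁ be a real inner product space of dimension 2m with a Hermitian structure J, let V₂ be a finite-dimensional real inner product space, and let F : V₁ → V₂ be a linear map whose restriction to (ker F)⊥ is an isometry onto range F (the pointwise Riemannian-map condition). Suppose ker F is anti-invariant, i.e. J(ker F) ⊆ (ker F)⊥. Then ker F is Lagrangian, i.e. J(ker F) = (ker F)⊥, if and only if dim(range F) = m. (Proposition 3.2.) -/
open scoped RealInnerProductSpace

/-!
Since `J` is injective on `ker F`, the subspace `J (ker F)` has the dimension of `ker F`. Contained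
in `(ker F)ᗮ`, it is all of it precisely when `ker F` and `(ker F)ᗮ` have equal dimension, that is,
when `ker F` is half-dimensional. By rank-nullity this happens precisely when `range F` is
half-dimensional.
-/

open Module

theorem map_eq_iff_finrank_eq_of_injOn {K V W : Type*} [DivisionRing K] [AddCommGroup V]
    [Module K V] [AddCommGroup W] [Module K W] {f : V →ₗ[K] W} {p : Submodule K V}
    {q : Submodule K W} [FiniteDimensional K q] (hf : Set.InjOn f p) (hpq : p.map f ≤ q) :
    p.map f = q ↔ finrank K p = finrank K q := by
  have finrank_map : finrank K (p.map f) = finrank K p := by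
    rw [← LinearMap.range_domRestrict, LinearMap.finrank_range_of_inj hf.injective]
  rw [← finrank_map]
  exact ⟨fun h ↦ h ▸ rfl, Submodule.eq_of_le_of_finrank_eq hpq⟩

theorem injective_of_apply_apply_eq_neg {α : Type*} [InvolutiveNeg α] {f : α → α}
    (hf : ∀ x, f (f x) = -x) : Function.Injective f :=
  .of_comp (f := f) <| (funext hf : f ∘ f = Neg.neg) ▸ neg_injective

section InnerProductSpace

variable {𝕜 V : Type*} [RCLike 𝕜] [NormedAddCommGroup V] [InnerProductSpace 𝕜 V]
  [FiniteDimensional 𝕜 V]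

theorem map_eq_orthogonal_iff_two_mul_finrank_eq {J : V →ₗ[𝕜] V} {p : Submodule 𝕜 V}
    (hJ : Set.InjOn J p) (hp : p.map J ≤ pᗮ) :
    p.map J = pᗮ ↔ 2 * finrank 𝕜 p = finrank 𝕜 V := by
  rw [map_eq_iff_finrank_eq_of_injOn hJ hp, ← p.finrank_add_finrank_orthogonal, two_mul,
    Nat.add_left_cancel_iff]

theorem lagrangian_iff_range_dim_general {W : Type*} [AddCommGroup W] [Module 𝕜 W]
    {m : ℕ} (hV : finrank 𝕜 V = 2 * m) {J : V →ₗ[𝕜] V} {F : V →ₗ[𝕜] W}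
    (hJ : Set.InjOn J F.ker) (hF : F.ker.map J ≤ F.kerᗮ) :
    F.ker.map J = F.kerᗮ ↔ finrank 𝕜 F.range = m := by
  have rank_nullity : finrank 𝕜 F.range + finrank 𝕜 F.ker = 2 * m :=
    F.finrank_range_add_finrank_ker.trans hV
  rw [map_eq_orthogonal_iff_two_mul_finrank_eq hJ hF]
  lia

end InnerProductSpace

/-- **Proposition 3.2.** Let `V₁` be a real inner product space of dimension `2*m` with a
Hermitian structure `J`, `V₂` a finite-dimensional real inner product space, and
`F : V₁ → V₂` a linear map whose restriction to `(ker F)ᗮ` is an isometry onto `range F`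
(the pointwise Riemannian-map condition).  Suppose `ker F` is anti-invariant:
`J(ker F) ⊆ (ker F)ᗮ`.  Then `ker F` is Lagrangian, i.e. `J(ker F) = (ker F)ᗮ`,
if and only if `dim (range F) = m`. -/
theorem lagrangian_iff_range_dim
    {V₁ : Type*} [NormedAddCommGroup V₁] [InnerProductSpace ℝ V₁] [FiniteDimensional ℝ V₁]
    {V₂ : Type*} [NormedAddCommGroup V₂] [InnerProductSpace ℝ V₂] [FiniteDimensional ℝ V₂]
    (m : ℕ) (hV₁ : Module.finrank ℝ V₁ = 2 * m)
    (J : V₁ →ₗ[ℝ] V₁)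
    (hJ2 : ∀ x : V₁, J (J x) = -x)
    (hJiso : ∀ x y : V₁, ⟪J x, J y⟫ = ⟪x, y⟫)
    (F : V₁ →ₗ[ℝ] V₂)
    (hRiem : ∀ x ∈ (LinearMap.ker F)ᗮ, ∀ y ∈ (LinearMap.ker F)ᗮ, ⟪F x, F y⟫ = ⟪x, y⟫)
    (hanti : (LinearMap.ker F).map J ≤ (LinearMap.ker F)ᗮ) :
    (LinearMap.ker F).map J = (LinearMap.ker F)ᗮ ↔
      Module.finrank ℝ (LinearMap.range F) = m :=
  lagrangian_iff_range_dim_general hV₁ (injective_of_apply_apply_eq_neg hJ2).injOn hanti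
end

section
/- Let V be a finite-dimensional real inner product space with a Hermitian structure J, and let W be a Lagrangian subspace of V (i.e. J(W) = W⊥) with dim W > 1. Suppose H ∈ W⊥ satisfies ⟨H, JY⟩⟨X, X⟩ = ⟨X, Y⟩⟨H, JX⟩ for all X, Y ∈ W. Then H = 0. (The key algebraic step in the proof of Theorem 4.2: a Lagrangian Riemannian map with totally umbilical fibers from a Kähler manifold has vanishing mean curvature vector of the fibers when dim(ker F∗) > 1.) -/
/-!
Since `dim W > 1`, every `Y ∈ W` admits a nonzero `X ∈ W` orthogonal to it, and for this `X` the
hypothesis reads `⟪H, J Y⟫ * ⟪X, X⟫ = 0`. So `H` is orthogonal to `J(W) = Wᗮ`, in which it lies.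
-/

open scoped RealInnerProductSpace

theorem ker_ne_bot_of_one_lt_rank {R M : Type*} [Ring R] [StrongRankCondition R]
    [AddCommGroup M] [Module R M] (hM : 1 < Module.rank R M) (f : M →ₗ[R] R) :
    LinearMap.ker f ≠ ⊥ := by
  intro hf
  have hle := LinearMap.lift_rank_le_of_injective f (LinearMap.ker_eq_bot.1 hf)
  rw [Module.rank_self, Cardinal.lift_one, Cardinal.lift_le_one_iff] at hle
  exact hM.not_ge hle

section InnerProductSpace

variable {𝕜 E : Type*} [RCLike 𝕜]

theorem exists_ne_zero_inner_eq_zero [SeminormedAddCommGroup E] [InnerProductSpace 𝕜 E]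
    (hE : 1 < Module.rank 𝕜 E) (y : E) : ∃ x : E, x ≠ 0 ∧ inner 𝕜 x y = 0 := by
  obtain ⟨x, hx, hx0⟩ :=
    Submodule.exists_mem_ne_zero_of_ne_bot (ker_ne_bot_of_one_lt_rank hE (innerₛₗ 𝕜 y))
  exact ⟨x, hx0, inner_eq_zero_symm.1 hx⟩

theorem eq_zero_of_forall_mul_inner_self_eq [NormedAddCommGroup E] [InnerProductSpace 𝕜 E]
    (hE : 1 < Module.rank 𝕜 E) {φ : E → 𝕜}
    (hφ : ∀ x y, φ y * inner 𝕜 x x = inner 𝕜 x y * φ x) : φ = 0 := by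
  funext y
  obtain ⟨x, hx0, hxy⟩ := exists_ne_zero_inner_eq_zero hE y
  have hmul : φ y * inner 𝕜 x x = 0 := by rw [hφ, hxy, zero_mul]
  exact (mul_eq_zero.1 hmul).resolve_right (inner_self_ne_zero.2 hx0)

theorem lagrangian_umbilical_H_zero_general [NormedAddCommGroup E] [InnerProductSpace 𝕜 E]
    {F : Type*} [NormedAddCommGroup F] [InnerProductSpace 𝕜 F] {J : E → F} {W : Submodule 𝕜 E}
    (hdim : 1 < Module.rank 𝕜 W) {H : F} (hH : H ∈ J '' W)
    (hcond : ∀ X ∈ W, ∀ Y ∈ W,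
      inner 𝕜 H (J Y) * inner 𝕜 X X = inner 𝕜 X Y * inner 𝕜 H (J X)) :
    H = 0 := by
  have horth : (fun Y : W ↦ inner 𝕜 H (J Y)) = 0 :=
    eq_zero_of_forall_mul_inner_self_eq hdim fun X Y ↦ hcond X X.2 Y Y.2
  obtain ⟨Z, hZ, rfl⟩ := hH
  exact inner_self_eq_zero.1 (congrFun horth ⟨Z, hZ⟩)

end InnerProductSpace

/-- **Key algebraic step in Theorem 4.2.** Let `V` be a finite-dimensional real inner product
space with a Hermitian structure `J`, and `W` a Lagrangian subspace (`J(W) = Wᗮ`) with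
`dim W > 1`.  Suppose `H ∈ Wᗮ` satisfies `⟪H, J Y⟫ * ⟪X, X⟫ = ⟪X, Y⟫ * ⟪H, J X⟫` for all
`X, Y ∈ W`.  Then `H = 0`. -/
theorem lagrangian_umbilical_H_zero
    {V : Type*} [NormedAddCommGroup V] [InnerProductSpace ℝ V] [FiniteDimensional ℝ V]
    (J : V →ₗ[ℝ] V)
    (hJ2 : ∀ x : V, J (J x) = -x)
    (hJiso : ∀ x y : V, ⟪J x, J y⟫ = ⟪x, y⟫)
    (W : Submodule ℝ V)
    (hLag : W.map J = Wᗮ)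
    (hdim : 1 < Module.finrank ℝ W)
    (H : V) (hH : H ∈ Wᗮ)
    (hcond : ∀ X ∈ W, ∀ Y ∈ W, ⟪H, J Y⟫ * ⟪X, X⟫ = ⟪X, Y⟫ * ⟪H, J X⟫) :
    H = 0 :=
  lagrangian_umbilical_H_zero_general (Module.one_lt_rank_of_one_lt_finrank hdim)
    (show H ∈ W.map J from hLag ▸ hH) hcond
end
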